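/- Watson's quintuple product identity: as an identity of formal power series (or for |q| < 1 and x ≠ 0), ∑_{k ∈ ℤ} q^{k(3k−1)/2} x^{3k} (1 − x q^k) = (q; q)_∞ (x; q)_∞ (q x^{−1}; q)_∞ (q x²; q²)_∞ (q x^{−2}; q²)_∞. -/

import Mathlib

/-!
Write `q = p ^ 2` (the case `q = 0` is checked by hand) and
`θ(p, z) = ∑ (-1)^n p^(n^2) z^n`, the sum running over `n ∈ ℤ`. The Jacobi triple product
`jacobi_triple` factors `θ(p, z)`, and turns `θ(p, x / p)` into `(q; q) (x; q) (q/x; q)` and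
`θ(p^2, x^2)` into `(q^2; q^2) (q x^2; q^2) (q/x^2; q^2)`. Their product is therefore the right-hand
side of the quintuple product identity times `(q^2; q^2)`.

On the other hand, the product of the two theta series is a double sum. Collecting the coefficient
of `x ^ N` with `N = 3k + r` and completing the square (`thetaTerm_mul`) leaves, up to a monomial,
the inner sum `∑ (-1)^n p^(6n^2 + (2 - 4r)n)`. For `r = 0` and `r = 1` this is Euler's pentagonal
series, equal to `(q^2; q^2)` by one more use of the triple product (`tsum_pentagonal`); for `r = 2`
the reflection `n ↦ 1 - n` shows that it vanishes (`tsum_antisymm`). So the double sum is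
`(q^2; q^2)` times the left-hand side (`theta_mul_theta`), and `(q^2; q^2) ≠ 0` can be cancelled.

The triple product itself is the limit `N → ∞` of the finite identity `hasSum_finite_jacobi`, whose
coefficients are the Gaussian binomials `[2N, N + n]` in base `p ^ 2`; the limit is taken inside
the sum by dominated convergence.
-/

open Filter Topology

/-! ### The reciprocal of `(q; q)_k` -/

/-- `1 / (q; q)_k`, extended by zero to negative `k`. With this convention the recurrence
`invFac_sub_one` holds for every integer `k`, so that Gaussian binomials written with `invFac`
vanish outside their range and obey their recurrences without boundary cases. -/
noncomputable def invFac (q : ℂ) (k : ℤ) : ℂ :=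
  if k < 0 then 0 else (∏ i ∈ Finset.range k.toNat, (1 - q ^ (i + 1)))⁻¹

/-- The general term `(-1)^n p^(n^2) z^n` of the bilateral theta series `θ(p, z)`. -/
noncomputable def thetaTerm (p z : ℂ) (n : ℤ) : ℂ := (-1) ^ n * p ^ (n ^ 2) * z ^ n

lemma one_sub_pow_ne_zero {q : ℂ} (hq : ‖q‖ < 1) (i : ℕ) : 1 - q ^ (i + 1) ≠ 0 := by
  intro h
  have h1 : ‖q ^ (i + 1)‖ = 1 := by rw [← sub_eq_zero.mp h]; simp
  rw [norm_pow] at h1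
  exact (pow_lt_one₀ (norm_nonneg q) hq (Nat.succ_ne_zero i)).ne h1

lemma invFac_sub_one {q : ℂ} (hq : ‖q‖ < 1) (k : ℤ) :
    invFac q (k - 1) = (1 - q ^ k) * invFac q k := by
  unfold invFac
  rcases lt_trichotomy k 0 with hk | rfl | hk
  · rw [if_pos hk, if_pos (by omega), mul_zero]
  · simp
  · obtain ⟨m, rfl⟩ : ∃ m : ℕ, k = m + 1 := ⟨(k - 1).toNat, by omega⟩
    rw [if_neg (by omega), if_neg (by omega), add_sub_cancel_right, Int.toNat_natCast,
      show ((m : ℤ) + 1).toNat = m + 1 by omega, Finset.prod_range_succ, mul_inv_rev,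
      show q ^ ((m : ℤ) + 1) = q ^ (m + 1) by exact_mod_cast zpow_natCast q (m + 1),
      mul_inv_cancel_left₀ (one_sub_pow_ne_zero hq m)]

lemma summable_norm_geom {a q : ℂ} (hq : ‖q‖ < 1) : Summable fun k : ℕ ↦ ‖-(a * q ^ k)‖ := by
  simpa [norm_mul, norm_pow] using
    (summable_geometric_of_lt_one (norm_nonneg q) hq).mul_left ‖a‖

lemma multipliable_geom {a q : ℂ} (hq : ‖q‖ < 1) : Multipliable fun k : ℕ ↦ 1 - a * q ^ k := by
  simpa [sub_eq_add_neg] using multipliable_one_add_of_summable (summable_norm_geom (a := a) hq)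

lemma multipliable_euler {q : ℂ} (hq : ‖q‖ < 1) : Multipliable fun k : ℕ ↦ 1 - q ^ (k + 1) := by
  simpa [pow_succ'] using multipliable_geom (a := q) hq

lemma euler_ne_zero {q : ℂ} (hq : ‖q‖ < 1) : ∏' k : ℕ, (1 - q ^ (k + 1)) ≠ 0 := by
  have := tprod_one_add_ne_zero_of_summable (f := fun k : ℕ ↦ -(q * q ^ k))
    (fun i ↦ by simpa [sub_eq_add_neg, pow_succ'] using one_sub_pow_ne_zero hq i)
    (summable_norm_geom hq)
  simpa [sub_eq_add_neg, pow_succ'] using this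

lemma tendsto_invFac {q : ℂ} (hq : ‖q‖ < 1) :
    Tendsto (invFac q) atTop (𝓝 (∏' k : ℕ, (1 - q ^ (k + 1)))⁻¹) := by
  have h1 := ((multipliable_euler hq).tendsto_prod_tprod_nat.inv₀ (euler_ne_zero hq)).comp
    (tendsto_atTop_atTop.mpr fun b : ℕ ↦ ⟨(b : ℤ), fun a h ↦ by omega⟩ :
      Tendsto Int.toNat atTop atTop)
  refine h1.congr' ?_
  filter_upwards [eventually_ge_atTop 0] with k hk
  simp [invFac, not_lt.mpr hk]

lemma exists_invFac_bound {q : ℂ} (hq : ‖q‖ < 1) : ∃ C, ∀ k, ‖invFac q k‖ ≤ C := by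
  have h : Tendsto (fun n : ℕ ↦ invFac q n) atTop (𝓝 (∏' k : ℕ, (1 - q ^ (k + 1)))⁻¹) :=
    (tendsto_invFac hq).comp tendsto_natCast_atTop_atTop
  obtain ⟨C, hC⟩ := h.norm.bddAbove_range
  refine ⟨C, fun k ↦ ?_⟩
  have hC' (n : ℕ) : ‖invFac q n‖ ≤ C := hC ⟨n, rfl⟩
  rcases lt_or_ge k 0 with hk | hk
  · simpa [invFac, hk] using (norm_nonneg _).trans (hC' 0)
  · lift k to ℕ using hk
    exact hC' k

/-! ### The Jacobi triple product -/

lemma summable_nat_thetaTerm {r : ℝ} (hr : r < 1) (hr0 : 0 < r) {s : ℝ} (hs : 0 < s) :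
    Summable fun n : ℕ ↦ r ^ (n ^ 2) * s ^ n := by
  refine summable_of_ratio_test_tendsto_lt_one zero_lt_one
    (Eventually.of_forall fun n ↦ by positivity) ?_
  have h : Tendsto (fun n : ℕ ↦ r * s * (r ^ 2) ^ n) atTop (𝓝 0) := by
    simpa using (tendsto_pow_atTop_nhds_zero_of_lt_one (sq_nonneg r)
      (by nlinarith : r ^ 2 < 1)).const_mul (r * s)
  refine h.congr fun n ↦ ?_
  rw [Real.norm_of_nonneg (by positivity), Real.norm_of_nonneg (by positivity),
    eq_div_iff (by positivity)]
  ring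

lemma norm_thetaTerm (p z : ℂ) (n : ℤ) : ‖thetaTerm p z n‖ = ‖p‖ ^ (n ^ 2) * ‖z‖ ^ n := by
  simp [thetaTerm]

lemma summable_norm_thetaTerm {p z : ℂ} (hp : ‖p‖ < 1) (hp0 : p ≠ 0) (hz : z ≠ 0) :
    Summable fun n ↦ ‖thetaTerm p z n‖ := by
  have hp0' := norm_pos_iff.mpr hp0
  have hz' := norm_pos_iff.mpr hz
  refine Summable.of_nat_of_neg ?_ ?_
  · refine (summable_nat_thetaTerm hp hp0' hz').congr fun n ↦ ?_
    rw [norm_thetaTerm]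
    norm_cast
  · refine (summable_nat_thetaTerm hp hp0' (inv_pos.mpr hz')).congr fun n ↦ ?_
    rw [norm_thetaTerm, neg_sq, zpow_neg, inv_pow]
    norm_cast

lemma thetaTerm_add_one {p z : ℂ} (hp0 : p ≠ 0) (hz : z ≠ 0) (n : ℤ) :
    thetaTerm p z (n + 1) = -(p * (p ^ 2) ^ n * z) * thetaTerm p z n := by
  unfold thetaTerm
  rw [show (n + 1) ^ 2 = n ^ 2 + 2 * n + 1 by ring, zpow_add₀ hp0, zpow_add₀ hp0,
    zpow_add₀ hz, zpow_add₀ (by norm_num), zpow_mul]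
  norm_cast
  simp
  ring

/-- The finite form of the Jacobi triple product:
`∏_{k < N} (1 - z p^(2k+1)) (1 - z⁻¹ p^(2k+1)) = ∑ (-1)^n p^(n^2) z^n [2N, N + n]`, with Gaussian
binomials in base `p ^ 2`. It is stated as a sum over all of `ℤ`, where `invFac` makes the terms
with `|n| > N` vanish. -/
lemma hasSum_finite_jacobi {p z : ℂ} (hp : ‖p‖ < 1) (hp0 : p ≠ 0) (hz : z ≠ 0) (N : ℕ) :
    HasSum (fun n : ℤ ↦ thetaTerm p z n * ((∏ i ∈ Finset.range (2 * N), (1 - (p ^ 2) ^ (i + 1))) *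
        invFac (p ^ 2) (N + n) * invFac (p ^ 2) (N - n)))
      (∏ k ∈ Finset.range N, ((1 - z * p * (p ^ 2) ^ k) * (1 - z⁻¹ * p * (p ^ 2) ^ k))) := by
  have hq : ‖p ^ 2‖ < 1 := by
    rw [norm_pow]; exact pow_lt_one₀ (norm_nonneg p) hp two_ne_zero
  have hq0 : p ^ 2 ≠ 0 := pow_ne_zero 2 hp0
  induction N with
  | zero =>
    convert hasSum_single (0 : ℤ) _ using 1
    · simp [thetaTerm, invFac]
    · intro n hn
      rcases lt_or_gt_of_ne hn with h | h
      · simp [invFac, h]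
      · simp [invFac, h]
  | succ N ih =>
    -- The new factor is `1 + p^(4N+2) - z p^(2N+1) - z⁻¹ p^(2N+1)`; the multiplications by `z` and
    -- `z⁻¹` shift the index by one, and comparing terms gives a recurrence in `invFac`.
    have hs1 := (Equiv.addRight (-1 : ℤ)).hasSum_iff.mpr ih
    have hs2 := (Equiv.addRight (1 : ℤ)).hasSum_iff.mpr ih
    rw [Finset.prod_range_succ]
    have hval := ((ih.mul_left (1 + p ^ 2 * ((p ^ 2) ^ N) ^ 2)).sub
      (hs1.mul_left (z * p * (p ^ 2) ^ N))).sub (hs2.mul_left (z⁻¹ * p * (p ^ 2) ^ N))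
    have hv (P : ℂ) : P * ((1 - z * p * (p ^ 2) ^ N) * (1 - z⁻¹ * p * (p ^ 2) ^ N)) =
        (1 + p ^ 2 * ((p ^ 2) ^ N) ^ 2) * P - z * p * (p ^ 2) ^ N * P -
          z⁻¹ * p * (p ^ 2) ^ N * P := by
      field_simp
      ring
    rw [hv]
    refine (congrArg (HasSum · _) (funext fun n ↦ ?_)).mpr hval
    simp only [Function.comp_apply, Equiv.coe_addRight]
    have t1 := thetaTerm_add_one hp0 hz (n + -1)
    have t2 := thetaTerm_add_one hp0 hz n
    rw [show n + -1 + 1 = n by ring, zpow_add₀ hq0, zpow_neg_one] at t1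
    have hpn : (p ^ 2) ^ n ≠ 0 := zpow_ne_zero _ hq0
    have t1' : thetaTerm p z (n + -1) = - (p * z⁻¹ * ((p ^ 2) ^ n)⁻¹) * thetaTerm p z n := by
      rw [t1]; field_simp
    set q := p ^ 2 with hqdef
    -- Express every `invFac` through the two values `invFac (N + 1 ± n)`; what remains is a
    -- polynomial identity in `p ^ (2N)` and `p ^ (2n)`.
    have u0 := invFac_sub_one hq (((N + 1 : ℕ) : ℤ) + n)
    have u1 := invFac_sub_one hq ((N : ℤ) + n)
    have v0 := invFac_sub_one hq (((N + 1 : ℕ) : ℤ) - n)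
    have v1 := invFac_sub_one hq ((N : ℤ) - n)
    rw [show ((N + 1 : ℕ) : ℤ) + n - 1 = N + n by push_cast; ring] at u0
    rw [show ((N + 1 : ℕ) : ℤ) - n - 1 = N - n by push_cast; ring] at v0
    rw [show (N : ℤ) + (n + -1) = N + n - 1 by ring,
      show (N : ℤ) - (n + -1) = ((N + 1 : ℕ) : ℤ) - n by push_cast; ring,
      show (N : ℤ) + (n + 1) = ((N + 1 : ℕ) : ℤ) + n by push_cast; ring,
      show (N : ℤ) - (n + 1) = N - n - 1 by ring, u1, v1, u0, v0, t1', t2,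
      show 2 * (N + 1) = 2 * N + 1 + 1 by ring, Finset.prod_range_succ, Finset.prod_range_succ]
    simp only [zpow_add₀ hq0, zpow_sub₀ hq0, zpow_natCast, pow_succ, pow_mul', pow_zero]
    generalize q ^ n = b at *
    generalize q ^ N = a at *
    generalize thetaTerm p z n = T
    have hp2 : q = p * p := by rw [hqdef]; ring
    clear_value q
    subst hp2
    field_simp
    ring

/-- The **Jacobi triple product**. -/
theorem jacobi_triple {p z : ℂ} (hp : ‖p‖ < 1) (hp0 : p ≠ 0) (hz : z ≠ 0) :
    ∑' n, thetaTerm p z n = (∏' k : ℕ, (1 - (p ^ 2) ^ (k + 1))) *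
      (∏' k : ℕ, (1 - z * p * (p ^ 2) ^ k)) * (∏' k : ℕ, (1 - z⁻¹ * p * (p ^ 2) ^ k)) := by
  have hq : ‖p ^ 2‖ < 1 := by
    rw [norm_pow]; exact pow_lt_one₀ (norm_nonneg p) hp two_ne_zero
  obtain ⟨C, hC⟩ := exists_invFac_bound hq
  have hA := ((multipliable_euler hq).tendsto_prod_tprod_nat).comp
    (tendsto_id.const_mul_atTop' (two_pos : 0 < 2))
  obtain ⟨B, hB⟩ := hA.norm.bddAbove_range
  set E := ∏' k : ℕ, (1 - (p ^ 2) ^ (k + 1)) with hE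
  have hE0 : E ≠ 0 := euler_ne_zero hq
  have hlim := tendsto_tsum_of_dominated_convergence (𝓕 := atTop)
    (f := fun (N : ℕ) (n : ℤ) ↦ thetaTerm p z n *
      ((∏ i ∈ Finset.range (2 * N), (1 - (p ^ 2) ^ (i + 1))) *
        invFac (p ^ 2) (N + n) * invFac (p ^ 2) (N - n)))
    (g := fun n ↦ thetaTerm p z n * (E * E⁻¹ * E⁻¹))
    (bound := fun n ↦ ‖thetaTerm p z n‖ * (B * C * C))
    ((summable_norm_thetaTerm hp hp0 hz).mul_right _)
    (fun n ↦ by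
      refine Tendsto.const_mul _ ((hA.mul ?_).mul ?_)
      · exact (tendsto_invFac hq).comp
          (tendsto_atTop_add_const_right _ n tendsto_natCast_atTop_atTop)
      · exact (tendsto_invFac hq).comp
          (tendsto_atTop_add_const_right _ (-n) tendsto_natCast_atTop_atTop))
    (Eventually.of_forall fun N n ↦ by
      have h1 : ‖∏ i ∈ Finset.range (2 * N), (1 - (p ^ 2) ^ (i + 1))‖ ≤ B := hB ⟨N, rfl⟩
      have h0 : 0 ≤ C := (norm_nonneg _).trans (hC 0)
      have h2 : 0 ≤ B := (norm_nonneg _).trans h1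
      rw [norm_mul, norm_mul, norm_mul]
      gcongr
      · exact hC _
      · exact hC _)
  simp_rw [(hasSum_finite_jacobi hp hp0 hz _).tsum_eq, Finset.prod_mul_distrib] at hlim
  have hprod := (multipliable_geom (a := z * p) hq).tendsto_prod_tprod_nat.mul
    (multipliable_geom (a := z⁻¹ * p) hq).tendsto_prod_tprod_nat
  have := tendsto_nhds_unique hlim hprod
  rw [tsum_mul_right, mul_inv_cancel₀ hE0, one_mul] at this
  rw [mul_assoc, ← this]
  field_simp

/-! ### The pentagonal series -/

/-- The factors of `(q; q)_∞` grouped by the residue of the exponent modulo 3. -/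
lemma tprod_three_dissection {q : ℂ} (hq : ‖q‖ < 1) :
    (∏' k : ℕ, (1 - (q ^ 3) ^ (k + 1))) * (∏' k : ℕ, (1 - q ^ 2 * (q ^ 3) ^ k)) *
      (∏' k : ℕ, (1 - q * (q ^ 3) ^ k)) = ∏' k : ℕ, (1 - q ^ (k + 1)) := by
  have hq3 : ‖q ^ 3‖ < 1 := by
    rw [norm_pow]; exact pow_lt_one₀ (norm_nonneg q) hq three_ne_zero
  have h := ((multipliable_euler hq3).tendsto_prod_tprod_nat.mul
    (multipliable_geom (a := q ^ 2) hq3).tendsto_prod_tprod_nat).mul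
    (multipliable_geom (a := q) hq3).tendsto_prod_tprod_nat
  have h' := ((multipliable_euler hq).tendsto_prod_tprod_nat).comp
    (tendsto_id.const_mul_atTop' (three_pos : 0 < 3))
  refine tendsto_nhds_unique h (h'.congr fun n ↦ ?_)
  simp only [Function.comp_apply, id]
  induction n with
  | zero => simp
  | succ n ih =>
    rw [show 3 * (n + 1) = 3 * n + 1 + 1 + 1 by ring]
    simp only [Finset.prod_range_succ, ih]
    ring

lemma neg_one_zpow_congr {a b c : ℤ} (h : a = b + 2 * c) : (-1 : ℂ) ^ a = (-1) ^ b := by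
  rw [h, zpow_add₀ (by norm_num), zpow_mul]
  norm_num

/-- **Euler's pentagonal number theorem** in base `p ^ 4`: the triple product `θ(p^6, p^2)`. -/
theorem tsum_pentagonal {p : ℂ} (hp : ‖p‖ < 1) (hp0 : p ≠ 0) :
    ∑' n : ℤ, (-1) ^ n * p ^ (6 * n ^ 2 + 2 * n) = ∏' k : ℕ, (1 - (p ^ 4) ^ (k + 1)) := by
  have h6 : ‖p ^ 6‖ < 1 := by
    rw [norm_pow]; exact pow_lt_one₀ (norm_nonneg p) hp (by norm_num)
  have h4 : ‖p ^ 4‖ < 1 := by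
    rw [norm_pow]; exact pow_lt_one₀ (norm_nonneg p) hp (by norm_num)
  rw [← tprod_three_dissection h4]
  convert jacobi_triple h6 (pow_ne_zero 6 hp0) (pow_ne_zero 2 hp0) using 1
  · refine tsum_congr fun n ↦ ?_
    rw [thetaTerm, zpow_add₀ hp0, zpow_mul, zpow_mul]
    norm_cast
    ring
  · have e : (p ^ 2)⁻¹ * p ^ 6 = p ^ 4 := by field_simp
    rw [e]
    ring_nf

/-! ### The product of the two theta series -/

/-- The terms of `θ(p, x/p) θ(p^2, x^2)` contributing to `x ^ (3k + r)`. Shifting the summation index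
of the second series by `k` removes the cross term in `k` and `n`, so that the dependence on `k` and
on `n` separates. -/
lemma thetaTerm_mul {p x : ℂ} (hp0 : p ≠ 0) (hx : x ≠ 0) (k r n : ℤ) :
    thetaTerm p (x / p) (3 * k + r - 2 * (n + k)) * thetaTerm (p ^ 2) (x ^ 2) (n + k) =
      x ^ (3 * k + r) * p ^ (3 * k ^ 2 + (2 * r - 1) * k + r ^ 2 - r) * (-1) ^ r *
        ((-1) ^ n * p ^ (6 * n ^ 2 + (2 - 4 * r) * n)) := by
  have h1 : (-1 : ℂ) ≠ 0 := by norm_num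
  have hs : (-1 : ℂ) ^ (3 * k + r - 2 * (n + k)) * (-1) ^ (n + k) = (-1) ^ r * (-1) ^ n := by
    rw [← zpow_add₀ h1, ← zpow_add₀ h1]
    exact neg_one_zpow_congr (c := k - n) (by ring)
  have hxp : x ^ (3 * k + r - 2 * (n + k)) * x ^ (2 * (n + k)) = x ^ (3 * k + r) := by
    rw [← zpow_add₀ hx]; congr 1; ring
  have hpp : p ^ (3 * k + r - 2 * (n + k)) ^ 2 * p ^ (-(3 * k + r - 2 * (n + k))) *
      p ^ (2 * (n + k) ^ 2) = p ^ (3 * k ^ 2 + (2 * r - 1) * k + r ^ 2 - r) *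
        p ^ (6 * n ^ 2 + (2 - 4 * r) * n) := by
    rw [← zpow_add₀ hp0, ← zpow_add₀ hp0, ← zpow_add₀ hp0]; congr 1; ring
  have c1 : (p ^ 2) ^ ((n + k) ^ 2) = p ^ (2 * (n + k) ^ 2) := by
    rw [zpow_mul]; norm_cast
  have c2 : (x ^ 2) ^ (n + k) = x ^ (2 * (n + k)) := by
    rw [zpow_mul]; norm_cast
  rw [thetaTerm, thetaTerm, c1, c2, div_zpow, div_eq_mul_inv, ← zpow_neg]
  linear_combination congrArg₂ (· * ·) hs (congrArg₂ (· * ·) hxp hpp)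

/-- The inner sum for the residue `r = 2` vanishes: `n ↦ 1 - n` changes the sign of each term. -/
lemma tsum_antisymm (p : ℂ) : ∑' n : ℤ, (-1) ^ n * p ^ (6 * n ^ 2 + (2 - 4 * 2) * n) = 0 := by
  have h := (Equiv.subLeft (1 : ℤ)).tsum_eq
    fun n : ℤ ↦ (-1 : ℂ) ^ n * p ^ (6 * n ^ 2 + (2 - 4 * 2) * n)
  have h' (n : ℤ) : (-1 : ℂ) ^ (1 - n) * p ^ (6 * (1 - n) ^ 2 + (2 - 4 * 2) * (1 - n)) =
      -((-1) ^ n * p ^ (6 * n ^ 2 + (2 - 4 * 2) * n)) := by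
    rw [neg_one_zpow_congr (c := -n) (by ring : 1 - n = n + 1 + 2 * -n),
      zpow_add₀ (by norm_num), show 6 * (1 - n) ^ 2 + (2 - 4 * 2) * (1 - n) =
        6 * n ^ 2 + (2 - 4 * 2) * n by ring]
    ring
  simp only [Equiv.subLeft_apply, h', tsum_neg] at h
  exact self_eq_neg.mp h.symm

/-- The inner sums for the residues `r = 1` and `r = 0` agree, by `n ↦ -n`. -/
lemma tsum_symm (p : ℂ) : ∑' n : ℤ, (-1) ^ n * p ^ (6 * n ^ 2 + (2 - 4 * 1) * n) =
    ∑' n : ℤ, (-1) ^ n * p ^ (6 * n ^ 2 + 2 * n) := by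
  rw [← (Equiv.neg ℤ).tsum_eq]
  refine tsum_congr fun n ↦ ?_
  rw [Equiv.neg_apply, neg_one_zpow_congr (c := -n) (by ring : -n = n + 2 * -n)]
  congr 2
  ring

/-- The product of the two theta series is the quintuple product series times the pentagonal series,
obtained by collecting powers of `x` according to their exponent modulo 3. -/
theorem theta_mul_theta {p x : ℂ} (hp : ‖p‖ < 1) (hp0 : p ≠ 0) (hx : x ≠ 0) :
    (∑' m, thetaTerm p (x / p) m) * (∑' n, thetaTerm (p ^ 2) (x ^ 2) n) =
      (∑' k : ℤ, (p ^ 2) ^ ((k * (3 * k - 1)) / 2) * x ^ (3 * k) * (1 - x * (p ^ 2) ^ k)) *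
        ∑' n : ℤ, (-1) ^ n * p ^ (6 * n ^ 2 + 2 * n) := by
  have hq : ‖p ^ 2‖ < 1 := by
    rw [norm_pow]; exact pow_lt_one₀ (norm_nonneg p) hp two_ne_zero
  have s1 := summable_norm_thetaTerm hp hp0 (div_ne_zero hx hp0)
  have s2 := summable_norm_thetaTerm hq (pow_ne_zero 2 hp0) (pow_ne_zero 2 hx)
  let F : ℤ × ℤ → ℂ := fun y ↦ thetaTerm p (x / p) y.1 * thetaTerm (p ^ 2) (x ^ 2) y.2
  have sF : Summable F := summable_mul_of_summable_norm s1 s2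
  -- `((k, r), n)` goes to the pair of indices `(m, n + k)` for which `m + 2 (n + k) = 3 k + r`.
  let e : (ℤ × Fin 3) × ℤ ≃ ℤ × ℤ :=
    ((Int.divModEquiv 3).symm.prodCongr (Equiv.refl ℤ)).trans
      { toFun := fun y ↦ (y.1 - 2 * (y.2 + y.1 / 3), y.2 + y.1 / 3)
        invFun := fun y ↦ (y.1 + 2 * y.2, y.2 - (y.1 + 2 * y.2) / 3)
        left_inv := fun y ↦ by ext <;> simp
        right_inv := fun y ↦ by ext <;> simp }
  have he (k : ℤ) (r : Fin 3) (n : ℤ) :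
      e ((k, r), n) = (3 * k + (r : ℕ) - 2 * (n + k), n + k) := by
    have hr : (3 * k + (r : ℕ) : ℤ) / 3 = k := by omega
    simp [e, mul_comm k 3, hr]
  have sFe : Summable fun y ↦ F (e y) := e.summable_iff.mpr sF
  rw [tsum_mul_tsum_of_summable_norm s1 s2, ← e.tsum_eq F, sFe.tsum_prod, sFe.prod.tsum_prod,
    ← tsum_mul_right]
  refine tsum_congr fun k ↦ ?_
  have hG (r : Fin 3) : ∑' n, F (e ((k, r), n)) =
      x ^ (3 * k + (r : ℕ)) * p ^ (3 * k ^ 2 + (2 * (r : ℕ) - 1) * k + (r : ℕ) ^ 2 - (r : ℕ)) *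
        (-1) ^ ((r : ℕ) : ℤ) * ∑' n : ℤ, (-1) ^ n * p ^ (6 * n ^ 2 + (2 - 4 * (r : ℕ)) * n) := by
    rw [← tsum_mul_left]
    refine tsum_congr fun n ↦ ?_
    rw [he]
    exact thetaTerm_mul hp0 hx k r n
  rw [tsum_fintype, Fin.sum_univ_three, hG, hG, hG]
  have hpow : (p ^ 2) ^ (k * (3 * k - 1) / 2) = p ^ (3 * k ^ 2 - k) := by
    have hd : 2 * (k * (3 * k - 1) / 2) = k * (3 * k - 1) :=
      Int.two_mul_ediv_two_of_even (by grind)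
    rw [← zpow_natCast, ← zpow_mul, Nat.cast_ofNat, hd]
    congr 1
    ring
  have hpow' : (p ^ 2) ^ k = p ^ (2 * k) := by rw [zpow_mul]; norm_cast
  have e0 : p ^ (3 * k ^ 2 + (2 * 0 - 1) * k + 0 ^ 2 - 0) = p ^ (3 * k ^ 2 - k) := by
    congr 1; ring
  have e1 : p ^ (3 * k ^ 2 + (2 * 1 - 1) * k + 1 ^ 2 - 1) =
      p ^ (3 * k ^ 2 - k) * p ^ (2 * k) := by
    rw [← zpow_add₀ hp0]; congr 1; ring
  simp only [Fin.val_zero, Fin.val_one, Fin.val_two, Nat.cast_zero, Nat.cast_one, Nat.cast_ofNat,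
    tsum_antisymm, tsum_symm, hpow, hpow', e0, e1]
  simp only [zpow_add₀ hx, zpow_one, zpow_zero, add_zero,
    mul_zero, sub_zero]
  ring

/-- Watson's quintuple product identity for `‖q‖ < 1` and `x ≠ 0`. -/
theorem quintuple_product (q x : ℂ) (hq : ‖q‖ < 1) (hx : x ≠ 0) :
    ∑' k : ℤ, q ^ ((k * (3 * k - 1)) / 2) * x ^ (3 * k) * (1 - x * q ^ k) =
      (∏' k : ℕ, (1 - q ^ (k + 1))) * (∏' k : ℕ, (1 - x * q ^ k)) *
        (∏' k : ℕ, (1 - q * x⁻¹ * q ^ k)) *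
        (∏' k : ℕ, (1 - q * x ^ 2 * (q ^ 2) ^ k)) *
        (∏' k : ℕ, (1 - q * x⁻¹ ^ 2 * (q ^ 2) ^ k)) := by
  rcases eq_or_ne q 0 with rfl | hq0
  · have hl : ∑' k : ℤ, (0 : ℂ) ^ ((k * (3 * k - 1)) / 2) * x ^ (3 * k) * (1 - x * 0 ^ k) =
        1 - x := by
      rw [tsum_eq_single 0]
      · simp
      · intro k hk
        have hd : 2 * (k * (3 * k - 1) / 2) = k * (3 * k - 1) :=
          Int.two_mul_ediv_two_of_even (by grind)
        have hne : k * (3 * k - 1) / 2 ≠ 0 := by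
          intro h0
          rw [h0, mul_zero, eq_comm, mul_eq_zero] at hd
          omega
        rw [zero_zpow _ hne]
        ring
    have hr : ∏' k : ℕ, (1 - x * 0 ^ k) = 1 - x := by
      rw [tprod_eq_mulSingle 0]
      · simp
      · intro k hk
        simp [hk]
    rw [hl, hr]
    simp
  · obtain ⟨p, rfl⟩ : ∃ p : ℂ, q = p ^ 2 := ⟨q ^ (1 / 2 : ℂ), by
      rw [← Complex.cpow_nat_mul]; simp⟩
    have hp0 : p ≠ 0 := by rintro rfl; simp at hq0
    have hp : ‖p‖ < 1 := by
      rw [norm_pow] at hq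
      exact (pow_lt_one_iff_of_nonneg (norm_nonneg p) two_ne_zero).mp hq
    have hE : ∏' k : ℕ, (1 - (p ^ 4) ^ (k + 1)) ≠ 0 := euler_ne_zero (by
      rw [norm_pow]; exact pow_lt_one₀ (norm_nonneg p) hp (by norm_num))
    have h := theta_mul_theta hp hp0 hx
    rw [tsum_pentagonal hp hp0, jacobi_triple hp hp0 (div_ne_zero hx hp0),
      jacobi_triple hq hq0 (pow_ne_zero 2 hx)] at h
    refine mul_right_cancel₀ hE (h.symm.trans ?_)
    rw [show x / p * p = x by field_simp, show (x / p)⁻¹ * p = p ^ 2 * x⁻¹ by field_simp,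
      show x ^ 2 * p ^ 2 = p ^ 2 * x ^ 2 by ring,
      show (x ^ 2)⁻¹ * p ^ 2 = p ^ 2 * x⁻¹ ^ 2 by rw [inv_pow]; ring,
      show (p ^ 2) ^ 2 = p ^ 4 by ring]
    ring
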